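/- Let q = p^m be a prime power with p prime, let n ≥ 3 be a prime different from p with not (n = 3 and q = 4), and suppose q is a primitive root modulo n. Then there exists a primitive 1-normal element of F_{q^n} over F_q. -/

import Mathlib

/-- The polynomial `Σ_{i=0}^{n-1} α^{q^i} x^{n-1-i}` appearing in the definition of
`k`-normal elements. -/
noncomputable def kNormalPoly {E : Type*} [Field E] (q n : ℕ) (α : E) : Polynomial E :=
  ∑ i ∈ Finset.range n, Polynomial.C (α ^ q ^ i) * Polynomial.X ^ (n - 1 - i)

/-- `α` is a `k`-normal element of `F_{q^n}` over `F_q`: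
`deg (gcd (x^n - 1, Σ_{i=0}^{n-1} α^{q^i} x^{n-1-i})) = k`, the gcd taken in `F_{q^n}[x]`. -/
def IsKNormal {E : Type*} [Field E] (q n k : ℕ) (α : E) : Prop :=
  letI := Classical.decEq E
  (EuclideanDomain.gcd ((Polynomial.X : Polynomial E) ^ n - 1) (kNormalPoly q n α)).natDegree = k

/-- `α` is a primitive element of the finite field `E`: it generates the multiplicative
group `Eˣ`. -/
def IsPrimitiveElem {E : Type*} [Field E] (α : E) : Prop :=
  ∀ x : E, x ≠ 0 → ∃ k : ℕ, α ^ k = x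

/-!
Write `q = #F` and `Q = 1 + q + ⋯ + q ^ (n - 1)`.

An element `α` has trace zero exactly when `X - 1` divides its normality polynomial `K`. As `q` is a
primitive root modulo `n`, so is `#E`, hence `X ^ n - 1 = (X - 1) Φₙ` with `Φₙ` irreducible over
`E`. Since `deg K < n`, every nonzero `α` of trace zero is `1`-normal.

It remains to find a generator of `Eˣ` in a given hyperplane. Multiplying `u` by an element of `Fˣ`
does not leave the hyperplane and, as the norm is surjective, amounts to multiplying by an arbitrary
`Q`-th power. Therefore it suffices that `u` is not an `r`-th power for any prime `r ∣ Q`. The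
`d`-th powers in the hyperplane are counted, for `d ∣ Q`, by character sums over subgroups of `Eˣ`,
which are at most `√#E`. The primes dividing `Q` are congruent to `1` modulo `2 * n`, so the `i`-th
of them is at least `6 * i + 1`. As `#E ^ 2 ≤ Q ^ 3`, this makes the union bound effective when
there are fewer than seven of them, and inclusion–exclusion otherwise.
-/

open Finset Polynomial

/-! ### Sieving by finitely many conditions -/

section Sieve

variable {ι α : Type*} [Fintype α] {s : Finset ι} {S : ι → Finset α} {f : α → ℝ}

lemma exists_forall_notMem_of_sum_lt (hf : ∀ a, 0 ≤ f a)
    (h : ∑ i ∈ s, ∑ a ∈ S i, f a < ∑ a, f a) : ∃ a, (∀ i ∈ s, a ∉ S i) ∧ f a ≠ 0 := by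
  classical
  by_contra! hcover
  refine h.not_ge ?_
  calc ∑ a, f a ≤ ∑ a, ∑ i ∈ s, if a ∈ S i then f a else 0 := sum_le_sum fun a _ ↦ by
        have hnonneg : ∀ i ∈ s, 0 ≤ if a ∈ S i then f a else 0 := fun i _ ↦ by
          split_ifs <;> simp [hf]
        by_cases ha : ∀ i ∈ s, a ∉ S i
        · exact (hcover a ha).trans_le (sum_nonneg hnonneg)
        · push Not at ha
          obtain ⟨i, hi, hai⟩ := ha
          exact (if_pos hai).ge.trans (single_le_sum hnonneg hi)
    _ = ∑ i ∈ s, ∑ a ∈ S i, f a := by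
        rw [sum_comm]
        simp only [sum_ite_mem, univ_inter]

variable [DecidableEq α] {g : ι → ℝ} {X ε : ℝ}

lemma abs_sum_inf_compl_sub_le
    (h : ∀ t ⊆ s, |∑ a ∈ t.inf S, f a - X * ∏ i ∈ t, g i| ≤ ε) :
    |∑ a ∈ s.inf (fun i ↦ (S i)ᶜ), f a - X * ∏ i ∈ s, (1 - g i)| ≤ 2 ^ #s * ε := by
  classical
  have hexpand : ∑ a ∈ s.inf (fun i ↦ (S i)ᶜ), f a - X * ∏ i ∈ s, (1 - g i) =
      ∑ t ∈ s.powerset, (-1) ^ #t * (∑ a ∈ t.inf S, f a - X * ∏ i ∈ t, g i) := by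
    simp only [inclusion_exclusion_sum_inf_compl, prod_sub, prod_const_one, mul_one, mul_sum,
      ← sum_sub_distrib, mul_sub, mul_left_comm X, zsmul_eq_mul, Int.cast_pow, Int.cast_neg,
      Int.cast_one]
  calc |∑ a ∈ s.inf (fun i ↦ (S i)ᶜ), f a - X * ∏ i ∈ s, (1 - g i)|
      ≤ ∑ t ∈ s.powerset, |∑ a ∈ t.inf S, f a - X * ∏ i ∈ t, g i| := by
        rw [hexpand]
        refine (abs_sum_le_sum_abs _ _).trans_eq (sum_congr rfl fun t _ ↦ ?_)
        simp [abs_mul]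
    _ ≤ #s.powerset • ε := sum_le_card_nsmul _ _ _ fun t ht ↦ h t (mem_powerset.1 ht)
    _ = 2 ^ #s * ε := by simp

lemma exists_forall_notMem_of_two_pow_mul_lt
    (h : ∀ t ⊆ s, |∑ a ∈ t.inf S, f a - X * ∏ i ∈ t, g i| ≤ ε)
    (hlt : 2 ^ #s * ε < X * ∏ i ∈ s, (1 - g i)) : ∃ a, (∀ i ∈ s, a ∉ S i) ∧ f a ≠ 0 := by
  have hpos : 0 < ∑ a ∈ s.inf (fun i ↦ (S i)ᶜ), f a := by
    linarith [(abs_le.1 (abs_sum_inf_compl_sub_le h)).1]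
  obtain ⟨a, ha, hfa⟩ := exists_ne_zero_of_sum_ne_zero hpos.ne'
  exact ⟨a, by simpa [mem_inf] using ha, hfa⟩

end Sieve

/-! ### Sieving by moduli congruent to one -/

lemma two_mul_dvd_sub_one_of_dvd_geom_sum {q n r : ℕ} (hn : n.Prime) (hn2 : n ≠ 2)
    (hq : (q : ZMod n) ≠ 1) (hr : r.Prime) (hdvd : r ∣ ∑ i ∈ range n, q ^ i) : 2 * n ∣ r - 1 := by
  have := Fact.mk hr
  have := Fact.mk hn
  have hsum : ∑ i ∈ range n, (q : ZMod r) ^ i = 0 := by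
    exact_mod_cast (ZMod.natCast_eq_zero_iff _ _).2 hdvd
  have hpow : (q : ZMod r) ^ n = 1 := by
    rw [← sub_eq_zero, ← mul_geom_sum, hsum, mul_zero]
  have hne : (q : ZMod r) ≠ 1 := by
    intro h
    have hrn : r ∣ n := by simpa [h, ZMod.natCast_eq_zero_iff] using hsum
    obtain rfl := (Nat.prime_dvd_prime_iff_eq hr hn).1 hrn
    exact hq h
  have hq0 : (q : ZMod r) ≠ 0 := fun h ↦ by simp [h, hn.ne_zero] at hpow
  have hnr : n ∣ r - 1 := orderOf_eq_prime hpow hne ▸ ZMod.orderOf_dvd_card_sub_one hq0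
  have hr2 : r ≠ 2 := by
    rintro rfl
    exact hn.one_lt.ne' (Nat.dvd_one.1 hnr)
  exact ((Nat.coprime_primes Nat.prime_two hn).2 hn2.symm).mul_dvd_of_dvd_of_dvd
    (hr.even_sub_one hr2).two_dvd hnr

section Moduli

variable {k m : ℕ} {P : Finset ℕ}

lemma mul_card_lt_of_forall_dvd_sub_one (hP : ∀ r ∈ P, 1 < r ∧ m ∣ r - 1) {a : ℕ} (ha : 0 < a)
    (hle : ∀ r ∈ P, r ≤ a) : m * #P < a := by
  have hcard : #P ≤ (a - 1) / m := by
    rw [← Nat.Ioc_filter_dvd_card_eq_div]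
    refine card_le_card_of_injOn (· - 1) (fun r hr ↦ ?_) fun r hr r' hr' h ↦ ?_
    · have := hP r hr
      have := hle r hr
      simp only [coe_filter, mem_Ioc, Set.mem_ofPred_eq]
      omega
    · have := hP r hr
      have := hP r' hr'
      simp only at h
      omega
  have := (Nat.mul_le_mul_left m hcard).trans (Nat.mul_div_le (a - 1) m)
  omega

lemma prod_range_le_prod_of_forall_dvd_sub_one (hkm : k ≤ m)
    (hP : ∀ r ∈ P, 1 < r ∧ m ∣ r - 1) {f : ℕ → ℕ} (hf : Monotone f) :
    ∏ i ∈ range #P, f (k * (i + 1) + 1) ≤ ∏ r ∈ P, f r := by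
  induction P using Finset.induction_on_max with
  | empty => simp
  | insert a P hlt ih =>
    have ha : a ∉ P := fun h ↦ (hlt a h).false
    have hcard : m * (#P + 1) < a := by
      rw [← card_insert_of_notMem ha]
      refine mul_card_lt_of_forall_dvd_sub_one hP
        (zero_lt_one.trans (hP a (mem_insert_self _ _)).1) ?_
      simpa using fun r hr ↦ (hlt r hr).le
    rw [card_insert_of_notMem ha, prod_range_succ, prod_insert ha, mul_comm]
    gcongr
    · exact hf ((Nat.mul_le_mul_right _ hkm).trans_lt hcard)
    · exact ih fun r hr ↦ hP r (mem_insert_of_mem hr)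

lemma pow_four_lt_mul_prod_range {w : ℕ} (hw : 0 < w) (hw7 : w < 7) :
    (w : ℝ) ^ 4 < (1 - w / 7 - 1 / ∏ i ∈ range w, (6 * (i + 1) + 1 : ℝ)) ^ 4 *
      ∏ i ∈ range w, (6 * (i + 1) + 1 : ℝ) ∧
    0 ≤ 1 - w / 7 - 1 / ∏ i ∈ range w, (6 * (i + 1) + 1 : ℝ) := by
  interval_cases w <;> norm_num [prod_range_succ]

lemma sixteen_pow_lt_prod_range {w : ℕ} (hw : 7 ≤ w) :
    16 ^ w < ∏ i ∈ range w, (6 * (i + 1) + 1 - 4) := by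
  induction w, hw using Nat.le_induction with
  | base => decide
  | succ w hw ih =>
    rw [prod_range_succ, pow_succ]
    exact Nat.mul_lt_mul_of_lt_of_le ih (by omega) (by omega)

variable {Q T : ℝ}

lemma sum_div_add_lt (hm : 6 ≤ m) (hP : ∀ r ∈ P, 1 < r ∧ m ∣ r - 1) (hne : P.Nonempty)
    (hcard : #P < 7) (hPQ : ((∏ r ∈ P, r : ℕ) : ℝ) ≤ Q) (hTQ : T ^ 4 ≤ Q ^ 3) :
    ∑ r ∈ P, (Q / r + T) < Q - 1 := by
  set R : ℝ := ∏ i ∈ range #P, (6 * (i + 1) + 1 : ℝ)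
  obtain ⟨hR, hnonneg⟩ := pow_four_lt_mul_prod_range hne.card_pos hcard
  have hRQ : R ≤ Q := by
    simp only [R]
    refine le_trans ?_ hPQ
    exact_mod_cast prod_range_le_prod_of_forall_dvd_sub_one hm hP (f := fun r ↦ r) monotone_id
  have hR0 : 0 < R := prod_pos fun i _ ↦ by positivity
  have hQ : 0 < Q := hR0.trans_le hRQ
  have hT : #P * T < (1 - #P / 7 - 1 / R) * Q := by
    refine lt_of_pow_lt_pow_left₀ 4 (mul_nonneg hnonneg hQ.le) ?_
    calc (#P * T) ^ 4 = (#P : ℝ) ^ 4 * T ^ 4 := mul_pow ..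
      _ ≤ (#P : ℝ) ^ 4 * Q ^ 3 := by gcongr
      _ < (1 - #P / 7 - 1 / R) ^ 4 * R * Q ^ 3 := by gcongr
      _ ≤ (1 - #P / 7 - 1 / R) ^ 4 * Q * Q ^ 3 := by gcongr
      _ = ((1 - #P / 7 - 1 / R) * Q) ^ 4 := by ring
  calc ∑ r ∈ P, (Q / r + T) ≤ #P • (Q / 7 + T) := by
        refine sum_le_card_nsmul _ _ _ fun r hr ↦ ?_
        have hr7 : 7 ≤ r := by
          have := hP r hr
          have := Nat.le_of_dvd (by omega) this.2
          omega
        gcongr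
        exact_mod_cast hr7
    _ = #P / 7 * Q + #P * T := by rw [nsmul_eq_mul]; ring
    _ < Q - Q / R := by linear_combination hT
    _ ≤ Q - 1 := by gcongr; rwa [one_le_div hR0]

lemma sub_four_le_mul_pow {r : ℝ} (hr : 1 ≤ r) : r - 4 ≤ r * (1 - 1 / r) ^ 4 := by
  have hbernoulli := one_add_mul_le_pow (a := -(1 / r))
    (by linarith [(div_le_one (by linarith)).2 hr]) 4
  calc r - 4 = r * (1 + (4 : ℕ) * -(1 / r)) := by field_simp; push_cast; ring
    _ ≤ r * (1 + -(1 / r)) ^ 4 := by gcongr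
    _ = r * (1 - 1 / r) ^ 4 := by rw [← sub_eq_add_neg]

lemma two_pow_card_mul_lt (hm : 6 ≤ m) (hP : ∀ r ∈ P, 1 < r ∧ m ∣ r - 1) (hcard : 7 ≤ #P)
    (hPQ : ((∏ r ∈ P, r : ℕ) : ℝ) ≤ Q) (hT : 0 < T) (hTQ : T ^ 4 ≤ Q ^ 3) :
    2 ^ #P * T < Q * ∏ r ∈ P, (1 - 1 / (r : ℝ)) := by
  have hone_le : ∀ r ∈ P, (1 : ℝ) ≤ r := fun r hr ↦ by exact_mod_cast (hP r hr).1.le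
  set Z := ∏ r ∈ P, (1 - 1 / (r : ℝ))
  have hZ : 0 ≤ Z := prod_nonneg fun r hr ↦ by
    have := hone_le r hr
    rw [sub_nonneg]
    exact (div_le_one (by linarith)).2 this
  have hQ : 0 ≤ Q := (Nat.cast_nonneg _).trans hPQ
  have hsixteen : (16 : ℝ) ^ #P < (∏ r ∈ P, (r : ℝ)) * Z ^ 4 := by
    calc (16 : ℝ) ^ #P < ((∏ r ∈ P, (r - 4) : ℕ) : ℝ) := by
          exact_mod_cast (sixteen_pow_lt_prod_range hcard).trans_le
            (prod_range_le_prod_of_forall_dvd_sub_one hm hP fun a b h ↦ Nat.sub_le_sub_right h 4)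
      _ ≤ ∏ r ∈ P, ((r : ℝ) * (1 - 1 / (r : ℝ)) ^ 4) := by
          rw [Nat.cast_prod]
          refine prod_le_prod (fun _ _ ↦ Nat.cast_nonneg _) fun r hr ↦ ?_
          have hr4 : 4 ≤ r := by
            have := hP r hr
            have := Nat.le_of_dvd (by omega) this.2
            omega
          rw [Nat.cast_sub hr4]
          exact sub_four_le_mul_pow (hone_le r hr)
      _ = (∏ r ∈ P, (r : ℝ)) * Z ^ 4 := by rw [prod_mul_distrib, prod_pow]
  refine lt_of_pow_lt_pow_left₀ 4 (mul_nonneg hQ hZ) ?_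
  calc (2 ^ #P * T) ^ 4 = 16 ^ #P * T ^ 4 := by
        rw [mul_pow, pow_right_comm]
        norm_num
    _ < (∏ r ∈ P, (r : ℝ)) * Z ^ 4 * T ^ 4 := by gcongr
    _ ≤ Q * Z ^ 4 * Q ^ 3 := by gcongr; rwa [← Nat.cast_prod]
    _ = (Q * Z) ^ 4 := by ring

end Moduli

/-! ### Powers in commutative groups -/

section Powers

variable {G : Type*} [CommGroup G]

lemma range_powMonoidHom_mul {a b : ℕ} (hab : a.Coprime b) :
    (powMonoidHom (a * b) : G →* G).range =
      (powMonoidHom a : G →* G).range ⊓ (powMonoidHom b : G →* G).range := by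
  ext x
  simp only [Subgroup.mem_inf, MonoidHom.mem_range, powMonoidHom_apply]
  constructor
  · rintro ⟨y, rfl⟩
    exact ⟨⟨y ^ b, by rw [← pow_mul, mul_comm]⟩, ⟨y ^ a, by rw [pow_mul]⟩⟩
  · rintro ⟨⟨y, rfl⟩, z, hz⟩
    refine ⟨z ^ a.gcdA b * y ^ a.gcdB b, ?_⟩
    have hbezout : (a * a.gcdA b + b * a.gcdB b : ℤ) = 1 := by
      rw [← Nat.gcd_eq_gcd_ab, hab, Nat.cast_one]
    calc (z ^ a.gcdA b * y ^ a.gcdB b) ^ (a * b)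
        = (z ^ b) ^ (a * a.gcdA b : ℤ) * (y ^ a) ^ (b * a.gcdB b : ℤ) := by
          simp only [← zpow_natCast, mul_zpow, ← zpow_mul]
          push_cast
          ring_nf
      _ = y ^ a := by rw [hz, ← zpow_add, hbezout, zpow_one]

lemma mem_range_powMonoidHom_prod_iff {t : Finset ℕ} (ht : ∀ r ∈ t, r.Prime) {x : G} :
    x ∈ (powMonoidHom (∏ r ∈ t, r) : G →* G).range ↔
      ∀ r ∈ t, x ∈ (powMonoidHom r : G →* G).range := by
  induction t using Finset.induction_on with
  | empty => simp
  | insert r t hrt ih =>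
    rw [forall_mem_insert] at ht ⊢
    have hcop : r.Coprime (∏ r ∈ t, r) := Nat.Coprime.prod_right fun r' hr' ↦
      (Nat.coprime_primes ht.1 (ht.2 r' hr')).2 (ne_of_mem_of_not_mem hr' hrt).symm
    rw [prod_insert hrt, range_powMonoidHom_mul hcop, Subgroup.mem_inf, ih ht.2]

/-- With respect to a generator, the exponent of `x` is a unit modulo `d`, and units modulo `d` lift
to units modulo the order of `G`. -/
lemma exists_zpowers_mul_pow_eq_top [IsCyclic G] [Finite G] {d : ℕ} (hd : d ∣ Nat.card G) {x : G}
    (hx : ∀ r, r.Prime → r ∣ d → x ∉ (powMonoidHom r : G →* G).range) :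
    ∃ y : G, Subgroup.zpowers (x * y ^ d) = ⊤ := by
  obtain ⟨γ, hγ⟩ := isCyclic_iff_exists_zpowers_eq_top.1 ‹IsCyclic G›
  have hord : orderOf γ = Nat.card G := orderOf_eq_card_of_zpowers_eq_top hγ
  obtain ⟨j, rfl⟩ : ∃ j : ℕ, γ ^ j = x := by
    rw [← Submonoid.mem_powers_iff, mem_powers_iff_mem_zpowers, hγ]
    exact Subgroup.mem_top x
  have hj : j.Coprime d := Nat.coprime_comm.1 <| Nat.coprime_of_dvd fun r hr hrd ⟨i, hi⟩ ↦
    hx r hr hrd ⟨γ ^ i, by rw [powMonoidHom_apply, ← pow_mul, hi, mul_comm]⟩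
  have : NeZero (Nat.card G) := ⟨Nat.card_pos.ne'⟩
  obtain ⟨m, hm⟩ := ZMod.unitsMap_surjective hd (ZMod.unitOfCoprime j hj)
  have hmod : (j : ℤ) ≡ (m : ZMod (Nat.card G)).val [ZMOD d] := by
    rw [← ZMod.intCast_eq_intCast_iff]
    have hval := congrArg Units.val hm
    rw [ZMod.unitsMap_val, ZMod.coe_unitOfCoprime, ZMod.cast_eq_val] at hval
    exact_mod_cast hval.symm
  obtain ⟨i, hi⟩ := hmod.dvd
  refine ⟨γ ^ i, ?_⟩
  have hpow : γ ^ j * (γ ^ i) ^ d = γ ^ (m : ZMod (Nat.card G)).val := by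
    simp only [← zpow_natCast, ← zpow_mul, ← zpow_add]
    congr 1
    linear_combination -hi
  rw [hpow]
  refine Subgroup.eq_top_of_card_eq _ ?_
  rw [Nat.card_zpowers, Nat.Coprime.orderOf_pow, hord]
  rw [hord]
  exact (ZMod.val_coe_unit_coprime m).symm

end Powers

/-! ### Character sums over subgroups of units -/

section CharacterSums

lemma sum_eq_add_sum_units {G₀ M : Type*} [GroupWithZero G₀] [Fintype G₀] [Fintype G₀ˣ]
    [AddCommMonoid M] (f : G₀ → M) : ∑ x, f x = f 0 + ∑ u : G₀ˣ, f u := by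
  classical
  rw [Fintype.sum_eq_add_sum_subtype_ne f 0, ← unitsEquivNeZero.sum_comp]
  rfl

lemma sum_mul_left_of_forall_mul_mem {G M : Type*} [Mul G] [IsLeftCancelMul G] [AddCommMonoid M]
    {S : Finset G} {g : G} (hS : ∀ s ∈ S, g * s ∈ S) (f : G → M) :
    ∑ s ∈ S, f (g * s) = ∑ s ∈ S, f s := by
  classical
  have himage : S.image (g * ·) = S :=
    eq_of_subset_of_card_le (image_subset_iff.2 hS)
      (card_image_of_injective S (mul_right_injective g)).ge
  conv_rhs => rw [← himage, sum_image (mul_right_injective g).injOn]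

variable {R : Type*} [CommRing R] [Fintype R] {ψ : AddChar R ℂ}

lemma sum_norm_sq_sum_mulShift (hψ : ψ.IsPrimitive) (A : Finset R) :
    ∑ y, ‖∑ a ∈ A, ψ (y * a)‖ ^ 2 = (Fintype.card R * #A : ℝ) := by
  classical
  have hexpand (y : R) : (‖∑ a ∈ A, ψ (y * a)‖ ^ 2 : ℂ) =
      ∑ a ∈ A, ∑ b ∈ A, ψ (y * (a - b)) := by
    simp only [← Complex.mul_conj', map_sum, sum_mul_sum, ← AddChar.map_neg_eq_conj,
      ← AddChar.map_add_eq_mul, sub_eq_add_neg, mul_add, mul_neg]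
  have horth : ∑ a ∈ A, ∑ b ∈ A, ∑ y, ψ (y * (a - b)) = Fintype.card R * #A := by
    simp [AddChar.sum_mulShift _ hψ, sub_eq_zero, mul_comm]
  rw [← Complex.ofReal_inj]
  push_cast
  simp only [hexpand]
  rw [← horth, sum_comm]
  exact sum_congr rfl fun a _ ↦ sum_comm

/-- The sum `∑ ψ(y u)` takes the same value at every `y ∈ H`, so Parseval's identity bounds it. -/
lemma norm_sum_subgroup_le (hψ : ψ.IsPrimitive) (H : Subgroup Rˣ) [Fintype Rˣ]
    [DecidablePred (· ∈ H)] : ‖∑ u with u ∈ H, ψ (u : R)‖ ≤ √(Fintype.card R) := by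
  set A : Finset R := ({u | u ∈ H} : Finset Rˣ).map ⟨Units.val, Units.val_injective⟩ with hA
  have hA0 : 0 < #A := card_pos.2 ⟨1, by simp [hA, H.one_mem]⟩
  have hconst : ∀ y ∈ A, ∑ a ∈ A, ψ (y * a) = ∑ u with u ∈ H, ψ (u : R) := by
    simp only [hA, mem_map, mem_filter_univ, Function.Embedding.coeFn_mk, sum_map]
    rintro _ ⟨v, hv, rfl⟩
    exact sum_mul_left_of_forall_mul_mem (fun u hu ↦ by simp_all [H.mul_mem])
      fun u : Rˣ ↦ ψ (u : R)
  have hparseval : #A * ‖∑ u with u ∈ H, ψ (u : R)‖ ^ 2 ≤ #A * Fintype.card R := by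
    calc #A * ‖∑ u with u ∈ H, ψ (u : R)‖ ^ 2 = ∑ y ∈ A, ‖∑ a ∈ A, ψ (y * a)‖ ^ 2 := by
          rw [← nsmul_eq_mul, ← sum_const]
          exact sum_congr rfl fun y hy ↦ by rw [hconst y hy]
      _ ≤ ∑ y, ‖∑ a ∈ A, ψ (y * a)‖ ^ 2 :=
          sum_le_sum_of_subset_of_nonneg (subset_univ A) fun _ _ _ ↦ by positivity
      _ = #A * Fintype.card R := by rw [sum_norm_sq_sum_mulShift hψ, mul_comm]
  exact Real.le_sqrt_of_sq_le (le_of_mul_le_mul_left hparseval (by exact_mod_cast hA0))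

end CharacterSums

/-! ### Hyperplanes in extensions of finite fields -/

/-- The exponent `Q = 1 + q + ⋯ + q ^ (n - 1)`, where `q = #F` and `n = [E : F]`, for which
`x ↦ x ^ Q` is the norm of the extension `E / F` of finite fields. -/
noncomputable def normExponent (F E : Type*) [Field F] [Fintype F] [Field E] [Algebra F E] : ℕ :=
  ∑ i ∈ range (Module.finrank F E), Fintype.card F ^ i

lemma cast_card_sub_one_ne_zero (α K : Type*) [Fintype α] [Nontrivial α] [AddGroupWithOne K]
    [CharZero K] : (Fintype.card α - 1 : K) ≠ 0 := by
  rw [sub_ne_zero]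
  exact_mod_cast Fintype.one_lt_card.ne'

section NormExponent

variable {F E : Type*} [Field F] [Fintype F] [Field E] [Algebra F E]

lemma unitsMap_algebraMap_norm [Finite E] (y : Eˣ) :
    Units.map (algebraMap F E) (Units.map (Algebra.norm F) y) = y ^ normExponent F E := by
  ext
  rw [Units.coe_map, Units.coe_map, Units.val_pow_eq_pow_val, normExponent,
    Fintype.card_eq_nat_card]
  exact FiniteField.algebraMap_norm_eq_pow_sum F E y

lemma unitsMap_mem_range_powMonoidHom [Finite E] {d : ℕ} (hd : d ∣ normExponent F E) (c : Fˣ) :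
    Units.map (algebraMap F E : F →* E) c ∈ (powMonoidHom d : Eˣ →* Eˣ).range := by
  obtain ⟨y, rfl⟩ := FiniteField.unitsMap_norm_surjective F E c
  obtain ⟨e, he⟩ := hd
  exact ⟨y ^ e, by rw [unitsMap_algebraMap_norm, he, powMonoidHom_apply, ← pow_mul, mul_comm]⟩

variable (F E) in
lemma sub_one_mul_normExponent [Finite E] :
    (Fintype.card F - 1) * normExponent F E = Nat.card Eˣ := by
  rw [Nat.card_units, Module.natCard_eq_pow_finrank (K := F) (V := E), Nat.card_eq_fintype_card,
    normExponent, mul_comm, geom_sum_mul_of_one_le Fintype.card_pos]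

lemma card_pow_le_normExponent {i : ℕ} (hi : i < Module.finrank F E) :
    Fintype.card F ^ i ≤ normExponent F E :=
  single_le_sum (f := (Fintype.card F ^ ·)) (fun _ _ ↦ Nat.zero_le _) (mem_range.2 hi)

lemma one_lt_normExponent (hn : 1 < Module.finrank F E) : 1 < normExponent F E :=
  Fintype.one_lt_card.trans_le (by simpa using card_pow_le_normExponent hn)

variable [Fintype E]

lemma card_sq_le_normExponent_pow (hn : 3 ≤ Module.finrank F E) :
    Fintype.card E ^ 2 ≤ normExponent F E ^ 3 := by
  calc Fintype.card E ^ 2 = Fintype.card F ^ (Module.finrank F E * 2) := by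
        rw [Module.card_eq_pow_finrank (K := F) (V := E), pow_mul]
    _ ≤ Fintype.card F ^ ((Module.finrank F E - 1) * 3) :=
        Nat.pow_le_pow_right Fintype.card_pos (by omega)
    _ = (Fintype.card F ^ (Module.finrank F E - 1)) ^ 3 := pow_mul ..
    _ ≤ normExponent F E ^ 3 := by
        gcongr
        exact card_pow_le_normExponent (by omega)

lemma card_filter_mem_range_powMonoidHom [DecidableEq E] {d : ℕ} (hd : d ∣ normExponent F E) :
    (#{u : Eˣ | u ∈ (powMonoidHom d : Eˣ →* Eˣ).range} : ℝ) =
      (Fintype.card F - 1) * (normExponent F E * (1 / d)) := by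
  have hdcard : d ∣ Nat.card Eˣ := hd.trans (Dvd.intro_left _ (sub_one_mul_normExponent F E))
  have hd0 : (d : ℝ) ≠ 0 := by
    exact_mod_cast (Nat.pos_of_dvd_of_pos hdcard Nat.card_pos).ne'
  calc (#{u : Eˣ | u ∈ (powMonoidHom d : Eˣ →* Eˣ).range} : ℝ)
      = (Nat.card (powMonoidHom d : Eˣ →* Eˣ).range : ℝ) := by
        rw [Nat.card_eq_fintype_card, Fintype.card_subtype]
    _ = (Nat.card Eˣ : ℝ) / d := by
        rw [IsCyclic.card_powMonoidHom_range, Nat.gcd_eq_right hdcard, Nat.cast_div hdcard hd0]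
    _ = (Fintype.card F - 1) * (normExponent F E * (1 / d)) := by
        rw [← sub_one_mul_normExponent F E, Nat.cast_mul, Nat.cast_sub Fintype.card_pos]
        ring

end NormExponent

/-- The indicator function of the hyperplane `ker ℓ` on `Eˣ`, scaled so that its total mass is
`normExponent F E - 1`. -/
noncomputable def kerWeight {F E : Type*} [Field F] [Fintype F] [DecidableEq F] [Field E]
    [Algebra F E] (ℓ : Module.Dual F E) (u : Eˣ) : ℝ :=
  if ℓ u = 0 then Fintype.card F / (Fintype.card F - 1) else 0

section Hyperplane

variable {F E : Type*} [Field F] [Field E] [Algebra F E] {ℓ : Module.Dual F E}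

lemma isPrimitive_compAddMonoidHom {M : Type*} [CommMonoid M] {φ : AddChar F M} (hφ : φ.IsPrimitive)
    (hℓ : ℓ ≠ 0) : (φ.compAddMonoidHom ℓ.toAddMonoidHom).IsPrimitive := by
  refine AddChar.IsPrimitive.of_ne_one fun h ↦ ?_
  obtain ⟨c, hc⟩ := AddChar.ne_one_iff.1 (by simpa using hφ one_ne_zero : φ ≠ 1)
  obtain ⟨x, rfl⟩ := LinearMap.surjective hℓ c
  exact hc (DFunLike.congr_fun h x)

variable [Fintype F] [DecidableEq F]

lemma kerWeight_nonneg (u : Eˣ) : 0 ≤ kerWeight ℓ u := by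
  have : (1 : ℝ) ≤ Fintype.card F := by exact_mod_cast Fintype.card_pos
  unfold kerWeight
  split_ifs
  · exact div_nonneg (by linarith) (by linarith)
  · exact le_rfl

lemma apply_eq_zero_of_kerWeight_ne_zero {u : Eˣ} (hu : kerWeight ℓ u ≠ 0) : ℓ u = 0 := by
  by_contra h
  exact hu (if_neg h)

lemma sub_one_mul_kerWeight {φ : AddChar F ℂ} (hφ : φ.IsPrimitive) (u : Eˣ) :
    ((Fintype.card F - 1 : ℝ) * kerWeight ℓ u : ℂ) =
      1 + ∑ c : Fˣ, φ (ℓ (Units.map (algebraMap F E : F →* E) c * u : Eˣ)) := by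
  have hq := cast_card_sub_one_ne_zero F ℂ
  calc ((Fintype.card F - 1 : ℝ) * kerWeight ℓ u : ℂ)
      = if ℓ u = 0 then (Fintype.card F : ℂ) else 0 := by
        unfold kerWeight
        split_ifs
        · push_cast
          field_simp
        · simp
    _ = ∑ c : F, φ (c * ℓ u) := by rw [AddChar.sum_mulShift _ hφ]; push_cast; rfl
    _ = 1 + ∑ c : Fˣ, φ (ℓ (Units.map (algebraMap F E : F →* E) c * u : Eˣ)) := by
        rw [sum_eq_add_sum_units]
        simp [← Algebra.smul_def]

lemma sum_kerWeight_eq {φ : AddChar F ℂ} (hφ : φ.IsPrimitive) {S : Finset Eˣ}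
    (hS : ∀ c : Fˣ, ∀ u ∈ S, Units.map (algebraMap F E : F →* E) c * u ∈ S) :
    (∑ u ∈ S, kerWeight ℓ u : ℂ) =
      #S / (Fintype.card F - 1) + ∑ u ∈ S, φ (ℓ u) := by
  have hq := cast_card_sub_one_ne_zero F ℂ
  have hmul : (Fintype.card F - 1 : ℂ) * ∑ u ∈ S, (kerWeight ℓ u : ℂ) =
      #S + (Fintype.card F - 1) * ∑ u ∈ S, φ (ℓ u) := by
    calc (Fintype.card F - 1 : ℂ) * ∑ u ∈ S, (kerWeight ℓ u : ℂ)
        = ∑ u ∈ S, (1 + ∑ c : Fˣ, φ (ℓ (Units.map (algebraMap F E : F →* E) c * u : Eˣ))) := by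
          rw [mul_sum]
          exact sum_congr rfl fun u _ ↦ by rw [← sub_one_mul_kerWeight hφ]; push_cast; rfl
      _ = #S + ∑ _ : Fˣ, ∑ u ∈ S, φ (ℓ u) := by
          rw [sum_add_distrib, sum_comm]
          congr 1
          · simp
          · exact sum_congr rfl fun c _ ↦ sum_mul_left_of_forall_mul_mem (hS c) fun u ↦ φ (ℓ u)
      _ = #S + (Fintype.card F - 1) * ∑ u ∈ S, φ (ℓ u) := by
          rw [sum_const, card_univ, Fintype.card_units, nsmul_eq_mul,
            Nat.cast_sub Fintype.card_pos, Nat.cast_one]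
  field_simp
  linear_combination hmul

variable [Fintype E] [DecidableEq E]

lemma sum_univ_kerWeight (hℓ : ℓ ≠ 0) : ∑ u, kerWeight ℓ u = normExponent F E - 1 := by
  have hφ := AddChar.FiniteField.primitiveChar_to_Complex_isPrimitive F
  set φ := AddChar.FiniteField.primitiveChar_to_Complex F
  have hchar : ∑ u : Eˣ, φ (ℓ u) = -1 := by
    have hsum : ∑ x : E, φ (ℓ x) = 0 := by
      have hψ := isPrimitive_compAddMonoidHom hφ hℓ
      exact AddChar.sum_eq_zero_of_ne_one (by simpa using hψ one_ne_zero)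
    rw [sum_eq_add_sum_units, map_zero, AddChar.map_zero_eq_one] at hsum
    linear_combination hsum
  have hq := cast_card_sub_one_ne_zero F ℂ
  rw [← Complex.ofReal_inj]
  push_cast
  rw [sum_kerWeight_eq hφ fun _ _ _ ↦ mem_univ _, hchar, card_univ, ← Nat.card_eq_fintype_card,
    ← sub_one_mul_normExponent F E, Nat.cast_mul, Nat.cast_sub Fintype.card_pos, Nat.cast_one,
    mul_div_cancel_left₀ _ hq, sub_eq_add_neg]

lemma abs_sum_range_powMonoidHom_kerWeight_sub_le (hℓ : ℓ ≠ 0) {d : ℕ}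
    (hd : d ∣ normExponent F E) :
    |∑ u with u ∈ (powMonoidHom d : Eˣ →* Eˣ).range, kerWeight ℓ u - normExponent F E * (1 / d)| ≤
      √(Fintype.card E) := by
  have hφ := AddChar.FiniteField.primitiveChar_to_Complex_isPrimitive F
  set φ := AddChar.FiniteField.primitiveChar_to_Complex F
  set H := (powMonoidHom d : Eˣ →* Eˣ).range
  have hq := cast_card_sub_one_ne_zero F ℝ
  have hsum : ((∑ u with u ∈ H, kerWeight ℓ u - normExponent F E * (1 / d) : ℝ) : ℂ) =
      ∑ u with u ∈ H, φ (ℓ u) := by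
    have hcard : (normExponent F E * (1 / d) : ℝ) =
        #{u | u ∈ H} / (Fintype.card F - 1) := by
      rw [card_filter_mem_range_powMonoidHom hd, mul_div_cancel_left₀ _ hq]
    rw [hcard]
    push_cast
    rw [sum_kerWeight_eq hφ fun _ u hu ↦ ?_, add_sub_cancel_left]
    rw [mem_filter_univ] at hu ⊢
    exact mul_mem (unitsMap_mem_range_powMonoidHom hd _) hu
  rw [← Real.norm_eq_abs, ← Complex.norm_real, hsum]
  exact norm_sum_subgroup_le (isPrimitive_compAddMonoidHom hφ hℓ) H

lemma abs_sum_inf_range_powMonoidHom_kerWeight_sub_le (hℓ : ℓ ≠ 0) {t : Finset ℕ}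
    (ht : t ⊆ (normExponent F E).primeFactors) :
    |∑ u ∈ t.inf fun r ↦ ({u | u ∈ (powMonoidHom r : Eˣ →* Eˣ).range} : Finset Eˣ),
      kerWeight ℓ u - normExponent F E * ∏ r ∈ t, 1 / (r : ℝ)| ≤ √(Fintype.card E) := by
  have hinf : (t.inf fun r ↦ ({u | u ∈ (powMonoidHom r : Eˣ →* Eˣ).range} : Finset Eˣ)) =
      ({u | u ∈ (powMonoidHom (∏ r ∈ t, r) : Eˣ →* Eˣ).range} : Finset Eˣ) := by
    ext u
    rw [mem_inf, mem_filter_univ,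
      mem_range_powMonoidHom_prod_iff fun r hr ↦ Nat.prime_of_mem_primeFactors (ht hr)]
    simp only [mem_filter_univ]
  have hprod : ∏ r ∈ t, 1 / (r : ℝ) = 1 / (∏ r ∈ t, r : ℕ) := by
    rw [prod_div_distrib, prod_const_one, Nat.cast_prod]
  rw [hinf, hprod]
  exact abs_sum_range_powMonoidHom_kerWeight_sub_le hℓ
    ((prod_dvd_prod_of_subset _ _ _ ht).trans (Nat.prod_primeFactors_dvd _))

end Hyperplane

section Generator

variable {F E : Type*} [Field F] [Fintype F] [Field E] [Finite E] [Algebra F E]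
  {ℓ : Module.Dual F E}

lemma exists_mem_ker_forall_notMem_range_powMonoidHom (hn : (Module.finrank F E).Prime)
    (hn3 : 3 ≤ Module.finrank F E)
    (hq : (Fintype.card F : ZMod (Module.finrank F E)) ≠ 1) (hℓ : ℓ ≠ 0) :
    ∃ u : Eˣ, ℓ u = 0 ∧ ∀ r, r.Prime → r ∣ normExponent F E →
      u ∉ (powMonoidHom r : Eˣ →* Eˣ).range := by
  classical
  have := Fintype.ofFinite E
  set Q := normExponent F E with hQdef
  have hQ : 1 < Q := one_lt_normExponent (by omega)
  have hmod : ∀ r ∈ Q.primeFactors, 1 < r ∧ 2 * Module.finrank F E ∣ r - 1 := fun r hr ↦ by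
    have hr' := Nat.prime_of_mem_primeFactors hr
    exact ⟨hr'.one_lt, two_mul_dvd_sub_one_of_dvd_geom_sum hn (by omega) hq hr'
      (Nat.dvd_of_mem_primeFactors hr)⟩
  have hprod : ((∏ r ∈ Q.primeFactors, r : ℕ) : ℝ) ≤ Q := by
    exact_mod_cast Nat.le_of_dvd (by omega) (Nat.prod_primeFactors_dvd Q)
  have hsqrt : √(Fintype.card E : ℝ) ^ 4 ≤ (Q : ℝ) ^ 3 := by
    rw [show 4 = 2 * 2 from rfl, pow_mul, Real.sq_sqrt (Nat.cast_nonneg _)]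
    exact_mod_cast card_sq_le_normExponent_pow hn3
  suffices ∃ u : Eˣ, (∀ r ∈ Q.primeFactors,
      u ∉ ({u | u ∈ (powMonoidHom r : Eˣ →* Eˣ).range} : Finset Eˣ)) ∧ kerWeight ℓ u ≠ 0 by
    obtain ⟨u, hu, hℓu⟩ := this
    refine ⟨u, apply_eq_zero_of_kerWeight_ne_zero hℓu, fun r hr hrQ ↦ ?_⟩
    simpa using hu r (Nat.mem_primeFactors.2 ⟨hr, hrQ, by omega⟩)
  rcases lt_or_ge #Q.primeFactors 7 with hcard | hcard
  · refine exists_forall_notMem_of_sum_lt kerWeight_nonneg ?_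
    rw [sum_univ_kerWeight hℓ]
    refine lt_of_le_of_lt (sum_le_sum fun r hr ↦ ?_) (sum_div_add_lt (by omega) hmod
      (Nat.nonempty_primeFactors.2 hQ) hcard hprod hsqrt)
    have := (abs_le.1 (abs_sum_range_powMonoidHom_kerWeight_sub_le hℓ
      (Nat.dvd_of_mem_primeFactors hr))).2
    rw [← hQdef, mul_one_div] at this
    linarith
  · refine exists_forall_notMem_of_two_pow_mul_lt
      (fun t ht ↦ abs_sum_inf_range_powMonoidHom_kerWeight_sub_le hℓ ht) ?_
    exact two_pow_card_mul_lt (by omega) hmod hcard hprod (by positivity) hsqrt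

lemma exists_zpowers_eq_top_mem_ker (hn : (Module.finrank F E).Prime)
    (hn3 : 3 ≤ Module.finrank F E)
    (hq : (Fintype.card F : ZMod (Module.finrank F E)) ≠ 1) (hℓ : ℓ ≠ 0) :
    ∃ u : Eˣ, Subgroup.zpowers u = ⊤ ∧ ℓ u = 0 := by
  obtain ⟨u, hu, hrange⟩ := exists_mem_ker_forall_notMem_range_powMonoidHom hn hn3 hq hℓ
  obtain ⟨y, hy⟩ := exists_zpowers_mul_pow_eq_top
    (Dvd.intro_left _ (sub_one_mul_normExponent F E)) hrange
  refine ⟨_, hy, ?_⟩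
  rw [← unitsMap_algebraMap_norm, mul_comm]
  simp [← Algebra.smul_def, hu]

end Generator

lemma isPrimitiveElem_of_zpowers_eq_top {E : Type*} [Field E] [Finite E] {u : Eˣ}
    (hu : Subgroup.zpowers u = ⊤) :
    IsPrimitiveElem (u : E) := by
  intro x hx
  obtain ⟨k, hk⟩ : Units.mk0 x hx ∈ Submonoid.powers u := by
    rw [mem_powers_iff_mem_zpowers, hu]
    exact Subgroup.mem_top _
  exact ⟨k, by simpa using congrArg Units.val hk⟩

/-! ### The normality polynomial of a trace-zero element -/

section OneNormal

open EuclideanDomain in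
lemma associated_gcd_mul_of_irreducible {R : Type*} [EuclideanDomain R] [DecidableEq R] {a b f : R}
    (ha : a ≠ 0) (hb : Irreducible b) (hf : a ∣ f) (hnf : ¬ a * b ∣ f) :
    Associated (gcd (a * b) f) a := by
  obtain ⟨c, hc⟩ : a ∣ gcd (a * b) f := dvd_gcd (dvd_mul_right a b) hf
  have hcb : c ∣ b := by
    rw [← mul_dvd_mul_iff_left ha, ← hc]
    exact gcd_dvd_left ..
  rcases hb.dvd_iff.1 hcb with hunit | hassoc
  · rw [hc]
    exact associated_mul_unit_left a c hunit
  · refine absurd ?_ hnf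
    calc a * b ∣ a * c := mul_dvd_mul_left a hassoc.dvd
      _ = gcd (a * b) f := hc.symm
      _ ∣ f := gcd_dvd_right ..

lemma irreducible_cyclotomic_of_orderOf_card {K : Type*} [Field K] [Fintype K] {n : ℕ}
    (hn : n.Prime) (hord : orderOf (Fintype.card K : ZMod n) = n - 1) :
    Irreducible (cyclotomic n K) := by
  have := Fact.mk hn
  obtain ⟨p, hchar⟩ := CharP.exists K
  obtain ⟨f, hp, hf⟩ := FiniteField.card K p
  have := Fact.mk hp
  have hcop : p.Coprime n := by
    rw [Nat.coprime_primes hp hn]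
    rintro rfl
    have := hn.two_le
    rw [hf, Nat.cast_pow, CharP.cast_eq_zero, zero_pow f.ne_zero, orderOf_zero] at hord
    omega
  refine irreducible_of_dvd_cyclotomic_of_natDegree hf hcop dvd_rfl ?_
  rw [natDegree_cyclotomic, Nat.totient_prime hn, ← orderOf_units, ZMod.coe_unitOfCoprime, ← hf,
    hord]

variable {E : Type*} [Field E] {q n : ℕ} {α : E}

lemma coeff_kNormalPoly (hn : 0 < n) : (kNormalPoly q n α).coeff (n - 1) = α := by
  rw [kNormalPoly, finsetSum_coeff, sum_eq_single_of_mem 0 (mem_range.2 hn)]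
  · simp
  · intro i hi hi0
    rw [mem_range] at hi
    rw [coeff_C_mul_X_pow, if_neg (by omega)]

lemma natDegree_kNormalPoly_le : (kNormalPoly q n α).natDegree ≤ n - 1 :=
  natDegree_sum_le_of_forall_le _ _ fun _ _ ↦
    (natDegree_C_mul_X_pow_le _ _).trans (Nat.sub_le _ _)

lemma eval_one_kNormalPoly : (kNormalPoly q n α).eval 1 = ∑ i ∈ range n, α ^ q ^ i := by
  simp [kNormalPoly, eval_finsetSum]

lemma isKNormal_one_of_sum_eq_zero (hn : n.Prime) (hirr : Irreducible (cyclotomic n E))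
    (hα : α ≠ 0) (hsum : ∑ i ∈ range n, α ^ q ^ i = 0) : IsKNormal q n 1 α := by
  classical
  have := Fact.mk hn
  have hfactor : (X : E[X]) ^ n - 1 = (X - C 1) * cyclotomic n E := by
    rw [← cyclotomic_prime_mul_X_sub_one E n, C_1, mul_comm]
  have hroot : X - C 1 ∣ kNormalPoly q n α := by
    rw [dvd_iff_isRoot, IsRoot, eval_one_kNormalPoly, hsum]
  have hne : kNormalPoly q n α ≠ 0 := fun h ↦
    hα (by rw [← coeff_kNormalPoly (q := q) (α := α) hn.pos, h, coeff_zero])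
  have hndvd : ¬ (X - C 1) * cyclotomic n E ∣ kNormalPoly q n α := by
    rw [← hfactor]
    refine not_dvd_of_natDegree_lt hne ?_
    rw [← C_1, natDegree_X_pow_sub_C]
    exact natDegree_kNormalPoly_le.trans_lt (Nat.sub_lt hn.pos one_pos)
  unfold IsKNormal
  rw [hfactor, natDegree_eq_of_degree_eq (degree_eq_degree_of_associated
    (associated_gcd_mul_of_irreducible (X_sub_C_ne_zero 1) hirr hroot hndvd)), natDegree_X_sub_C]

end OneNormal

lemma isKNormal_one_of_trace_eq_zero {F E : Type*} [Field F] [Fintype F] [Field E] [Finite E]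
    [Algebra F E] (hn : (Module.finrank F E).Prime)
    (hord : orderOf (Fintype.card F : ZMod (Module.finrank F E)) = Module.finrank F E - 1)
    {α : E} (hα : α ≠ 0) (htrace : Algebra.trace F E α = 0) :
    IsKNormal (Fintype.card F) (Module.finrank F E) 1 α := by
  have := Fact.mk hn
  have := Fintype.ofFinite E
  have hirr : Irreducible (cyclotomic (Module.finrank F E) E) := by
    refine irreducible_cyclotomic_of_orderOf_card hn ?_
    rw [Module.card_eq_pow_finrank (K := F) (V := E), Nat.cast_pow, ZMod.pow_card, hord]
  refine isKNormal_one_of_sum_eq_zero hn hirr hα ?_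
  rw [← Nat.card_eq_fintype_card, ← FiniteField.algebraMap_trace_eq_sum_pow, htrace, map_zero]

/-- let `n ≥ 3` be a prime different from `p = char F_q` with not
(`n = 3` and `q = 4`), and let `q` be a primitive root modulo `n`.  Then there exists a
primitive `1`-normal element of `F_{q^n}` over `F_q`. -/
theorem primitive_one_normal_exists
    (F E : Type*) [Field F] [Fintype F] [Field E] [Fintype E] [Algebra F E]
    (n : ℕ) (hnprime : n.Prime) (hn3 : 3 ≤ n) (hnp : n ≠ ringChar F)
    (hexc : ¬(n = 3 ∧ Fintype.card F = 4))
    (hprimroot : orderOf ((Fintype.card F : ℕ) : ZMod n) = n - 1)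
    (hrank : Module.finrank F E = n) :
    ∃ α : E, IsPrimitiveElem α ∧ IsKNormal (Fintype.card F) n 1 α := by
  subst hrank
  have hq : (Fintype.card F : ZMod (Module.finrank F E)) ≠ 1 := by
    intro h
    rw [h, orderOf_one] at hprimroot
    omega
  obtain ⟨u, hgen, htrace⟩ :=
    exists_zpowers_eq_top_mem_ker hnprime hn3 hq (Algebra.trace_ne_zero F E)
  exact ⟨u, isPrimitiveElem_of_zpowers_eq_top hgen,
    isKNormal_one_of_trace_eq_zero hnprime hprimroot u.ne_zero htrace⟩
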